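/- Let R be a right artinian ring, P an indecomposable projective right R-module whose socle contains a submodule isomorphic to S ⊕ S for a simple module S. Then M₁ = P/S and M₂ = P/(S ⊕ S) are non-isomorphic indecomposable modules and φ(M₁ ⊕ M₂) ≥ 1. -/

import Mathlib

open Module Function

universe u

variable (R : Type u) [Ring R]

/-- A finitely generated right `R`-module, encoded as a module over `Rᵐᵒᵖ`. -/
structure FGMod where
  carrier : Type u
  [isAddCommGroup : AddCommGroup carrier]
  [isModule : Module Rᵐᵒᵖ carrier]
  [isFinite : Module.Finite Rᵐᵒᵖ carrier]

attribute [instance] FGMod.isAddCommGroup FGMod.isModule FGMod.isFinite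

instance : CoeSort (FGMod R) (Type u) := ⟨FGMod.carrier⟩

variable {R}

/-- Isomorphism of f.g. right modules. -/
def FGMod.Iso (M N : FGMod R) : Prop := Nonempty (M ≃ₗ[Rᵐᵒᵖ] N)

/-- Direct sum. -/
def FGMod.prod (M N : FGMod R) : FGMod R := ⟨M × N⟩

/-- `M^k`, the direct sum of `k` copies of `M`. -/
def FGMod.pow (M : FGMod R) (k : ℕ) : FGMod R := ⟨Fin k → M⟩

/-- `N` is (isomorphic to) a direct summand of `M`. -/
def FGMod.IsSummand (N M : FGMod R) : Prop :=
  ∃ A B : Submodule Rᵐᵒᵖ M, IsCompl A B ∧ Nonempty (N ≃ₗ[Rᵐᵒᵖ] A)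

/-- `M` is indecomposable. -/
def FGMod.Indec (M : FGMod R) : Prop :=
  Nontrivial M ∧ ∀ A B : Submodule Rᵐᵒᵖ M, IsCompl A B → A = ⊥ ∨ B = ⊥

/-- `M` is projective. -/
def FGMod.Proj (M : FGMod R) : Prop := Module.Projective Rᵐᵒᵖ M

/-- `f : P → M` is a projective cover: `P` projective, `f` surjective with superfluous kernel. -/
def IsProjCover (M P : FGMod R) (f : P →ₗ[Rᵐᵒᵖ] M) : Prop :=
  P.Proj ∧ Surjective f ∧ ∀ N : Submodule Rᵐᵒᵖ P, N ⊔ LinearMap.ker f = ⊤ → N = ⊤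

/-- `N` is a (first) syzygy of `M`: the kernel of a projective cover of `M`. -/
def IsSyzygy (M N : FGMod R) : Prop :=
  ∃ (P : FGMod R) (f : P →ₗ[Rᵐᵒᵖ] M),
    IsProjCover M P f ∧ Nonempty (N ≃ₗ[Rᵐᵒᵖ] LinearMap.ker f)

/-- `N` is an `n`-th syzygy of `M`. -/
def IsSyzygyN : ℕ → FGMod R → FGMod R → Prop
  | 0, M, N => M.Iso N
  | n+1, M, N => ∃ L, IsSyzygy M L ∧ IsSyzygyN n L N

/-- `M` has projective dimension at most `n`. -/
def HasPdLE : ℕ → FGMod R → Prop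
  | 0, M => M.Proj
  | n+1, M => M.Proj ∨ ∃ N, IsSyzygy M N ∧ HasPdLE n N

/-- `M` has finite projective dimension. -/
def FinPd (M : FGMod R) : Prop := ∃ n, HasPdLE n M

/-- The projective dimension of `M` (junk value if infinite). -/
noncomputable def pdIT (M : FGMod R) : ℕ := sInf {n | HasPdLE n M}

variable (R)

/-- The Igusa–Todorov relations in the free abelian group on f.g. right modules:
`[A] - [B] - [C]` whenever `A ≅ B ⊕ C`, and `[P]` for `P` projective. -/
def ITRel : Set (FreeAbelianGroup (FGMod R)) :=
  {x | ∃ A B C : FGMod R, Nonempty (A ≃ₗ[Rᵐᵒᵖ] (B × C : Type u)) ∧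
        x = FreeAbelianGroup.of A - FreeAbelianGroup.of B - FreeAbelianGroup.of C} ∪
  {x | ∃ P : FGMod R, P.Proj ∧ x = FreeAbelianGroup.of P}

/-- The Igusa–Todorov group `K`. -/
def ITK := FreeAbelianGroup (FGMod R) ⧸ AddSubgroup.closure (ITRel R)

noncomputable instance : AddCommGroup (ITK R) :=
  QuotientAddGroup.Quotient.addCommGroup _

/-- The class `[M]` in `K`. -/
noncomputable def ITcls (M : FGMod R) : ITK R := QuotientAddGroup.mk (FreeAbelianGroup.of M)

/-- `⟨M⟩`: the subgroup of `K` generated by the indecomposable non-projective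
direct summands of `M`. -/
noncomputable def ITgen (M : FGMod R) : AddSubgroup (ITK R) :=
  AddSubgroup.closure
    {x | ∃ N : FGMod R, N.IsSummand M ∧ N.Indec ∧ ¬N.Proj ∧ x = ITcls R N}

/-- The rank of a subgroup of `K`. -/
noncomputable def rkIT (H : AddSubgroup (ITK R)) : ℕ :=
  Module.finrank ℤ (AddSubgroup.toIntSubmodule H)

/-- `OmK` is a syzygy endomorphism of `K`: a group endomorphism sending `[M]` to `[ΩM]`. -/
def IsSyzygyEnd (OmK : AddMonoid.End (ITK R)) : Prop :=
  ∀ M N : FGMod R, IsSyzygy M N → OmK (ITcls R M) = ITcls R N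

/-- The Igusa–Todorov function `φ`: the least `n` such that the rank of
`Ω^i⟨M⟩` equals that of `Ω^n⟨M⟩` for all `i ≥ n`. -/
noncomputable def phiIT (OmK : AddMonoid.End (ITK R)) (M : FGMod R) : ℕ :=
  sInf {n | ∀ i, n ≤ i →
    rkIT R ((ITgen R M).map ((OmK ^ i : AddMonoid.End (ITK R)) : ITK R →+ ITK R))
      = rkIT R ((ITgen R M).map ((OmK ^ n : AddMonoid.End (ITK R)) : ITK R →+ ITK R))}

/-- The second Igusa–Todorov function `ψ`. -/
noncomputable def psiIT (OmK : AddMonoid.End (ITK R)) (M : FGMod R) : ℕ :=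
  phiIT R OmK M + sSup {d | ∃ N X : FGMod R, IsSyzygyN (phiIT R OmK M) M N ∧
      X.IsSummand N ∧ FinPd X ∧ d = pdIT X}

/-- The socle of a module: the sum of its simple submodules. -/
def socleIT (M : FGMod R) : Submodule Rᵐᵒᵖ M :=
  sSup {S : Submodule Rᵐᵒᵖ M | IsSimpleModule Rᵐᵒᵖ S}

/-!
A projective module `P` with local endomorphism ring is hollow, which in lattice terms says that
its top submodule is `SupIrred`. Every nonzero quotient of `P` is then again hollow, hence
indecomposable, with projective cover `P`. So `P / T₁` and `P / (T₁ ⊕ T₂)` have syzygies `T₁` and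
`T₁ ⊕ T₂ ≅ T₁ ⊕ T₁`, whose classes `[T₁]` and `2[T₁]` span a group of rank at most one. The classes
of the two quotients themselves are linearly independent: for indecomposable non-projective `X` of
finite length, the multiplicity of `X` as a direct summand defines a homomorphism `K → ℤ` with
value one on `[X]` and zero on every other indecomposable. The rank therefore drops from two when
`Ω` is applied once.
-/

section IndecomposableModules

variable {A : Type*} [Ring A] {M X : Type*} [AddCommGroup M] [Module A M]
  [AddCommGroup X] [Module A X]

/-- Indecomposability of a module that need not be bundled as an `FGMod`. It unfolds to the same
condition as `FGMod.Indec`. -/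
def IsIndecomposable (A M : Type*) [Ring A] [AddCommGroup M] [Module A M] : Prop :=
  Nontrivial M ∧ ∀ B C : Submodule A M, IsCompl B C → B = ⊥ ∨ C = ⊥

theorem FGMod.Indec.isIndecomposable {R : Type u} [Ring R] {M : FGMod R} (hM : M.Indec) :
    IsIndecomposable Rᵐᵒᵖ M :=
  hM

namespace IsIndecomposable

theorem of_linearEquiv (hX : IsIndecomposable A X) (e : M ≃ₗ[A] X) : IsIndecomposable A M := by
  have := hX.1
  refine ⟨e.toEquiv.nontrivial, fun B C hBC => ?_⟩
  have himage : IsCompl (B.map e.toLinearMap) (C.map e.toLinearMap) :=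
    (Submodule.orderIsoMapComap e).isCompl hBC
  simpa only [Submodule.map_eq_bot_iff] using hX.2 _ _ himage

theorem bijective_of_comp_eq_id [Nontrivial X] (hM : IsIndecomposable A M) {f : M →ₗ[A] X}
    {g : X →ₗ[A] M} (hfg : f ∘ₗ g = .id) : Bijective f := by
  have hidem : IsIdempotentElem (g ∘ₗ f : Module.End A M) := by
    change g ∘ₗ (f ∘ₗ g) ∘ₗ f = g ∘ₗ f
    rw [hfg, LinearMap.id_comp]
  have hg : Injective g := LinearMap.injective_of_comp_eq_id g f hfg
  refine ⟨?_, LinearMap.surjective_of_comp_eq_id g f hfg⟩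
  rcases hM.2 _ _ (LinearMap.IsIdempotentElem.isCompl hidem) with hrange | hker
  · obtain ⟨x, hx⟩ := exists_ne (0 : X)
    have hgfg : g (f (g x)) = 0 := LinearMap.congr_fun (LinearMap.range_eq_bot.mp hrange) (g x)
    rw [← LinearMap.comp_apply f g, hfg, LinearMap.id_apply] at hgfg
    exact absurd (hg (hgfg.trans g.map_zero.symm)) hx
  · exact Injective.of_comp (f := ⇑g) (LinearMap.ker_eq_bot.mp hker)

theorem isUnit_or_isNilpotent [IsArtinian A M] [IsNoetherian A M] (hM : IsIndecomposable A M)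
    (f : Module.End A M) : IsUnit f ∨ IsNilpotent f := by
  obtain ⟨n, hn⟩ := Filter.eventually_atTop.mp f.eventually_isCompl_ker_pow_range_pow
  rcases hM.2 _ _ (hn (n + 1) n.le_succ) with hker | hrange
  · have hf : Injective f := by
      rw [LinearMap.ker_eq_bot, pow_succ] at hker
      exact Injective.of_comp (f := ⇑(f ^ n)) hker
    exact .inl ((Module.End.isUnit_iff f).mpr
      (IsArtinian.bijective_of_injective_endomorphism f hf))
  · exact .inr ⟨n + 1, LinearMap.range_eq_bot.mp hrange⟩

theorem isLocalRing_end [IsArtinian A M] [IsNoetherian A M] (hM : IsIndecomposable A M) :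
    IsLocalRing (Module.End A M) :=
  have := hM.1
  .of_isUnit_or_isUnit_one_sub_self fun f =>
    (hM.isUnit_or_isNilpotent f).imp_right IsNilpotent.isUnit_one_sub

theorem not_projective_quotient (hM : IsIndecomposable A M) {T : Submodule A M} (hbot : T ≠ ⊥)
    (htop : T ≠ ⊤) : ¬ Module.Projective A (M ⧸ T) := by
  intro _
  have := Submodule.Quotient.nontrivial_iff.mpr htop
  obtain ⟨s, hs⟩ := T.mkQ.exists_rightInverse_of_surjective T.range_mkQ
  have hinj : Injective T.mkQ := (hM.bijective_of_comp_eq_id hs).injective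
  exact hbot (by rw [← T.ker_mkQ, LinearMap.ker_eq_bot.mpr hinj])

theorem of_supIrred_top (h : SupIrred (⊤ : Submodule A M)) : IsIndecomposable A M := by
  refine ⟨?_, fun B C hBC => ?_⟩
  · by_contra hM
    rw [not_nontrivial_iff_subsingleton] at hM
    exact h.1 fun _ _ => (Subsingleton.elim _ _).le
  · rcases h.2 hBC.sup_eq_top with rfl | rfl
    · exact .inr (by simpa only [top_inf_eq] using hBC.inf_eq_bot)
    · exact .inl (by simpa only [inf_top_eq] using hBC.inf_eq_bot)

end IsIndecomposable

theorem nontrivial_of_nontrivial_end (A M : Type*) [Ring A] [AddCommGroup M] [Module A M]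
    [Nontrivial (Module.End A M)] : Nontrivial M := by
  by_contra! _
  exact not_subsingleton (Module.End A M) inferInstance

theorem supIrred_top_of_isLocalRing_end [Module.Projective A M]
    [IsLocalRing (Module.End A M)] : SupIrred (⊤ : Submodule A M) := by
  have := nontrivial_of_nontrivial_end A M
  refine ⟨not_isMin_top, fun B C hBC => ?_⟩
  have hsurj : Surjective (C.mkQ ∘ₗ B.subtype) := by
    rwa [← LinearMap.range_eq_top, LinearMap.range_comp, Submodule.range_subtype,
      Submodule.map_mkQ_eq_top, sup_comm]
  obtain ⟨l, hl⟩ := Module.projective_lifting_property (C.mkQ ∘ₗ B.subtype) C.mkQ hsurj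
  let e : Module.End A M := B.subtype ∘ₗ l
  have he (x : M) : e x ∈ B := (l x).2
  have hsub (x : M) : (1 - e) x ∈ C := by
    rw [← C.ker_mkQ, LinearMap.mem_ker, LinearMap.sub_apply, map_sub, sub_eq_zero]
    exact (LinearMap.congr_fun hl x).symm
  refine (IsLocalRing.isUnit_or_isUnit_of_add_one (a := e) (b := 1 - e) (by simp)).imp
    (fun hu => ?_) fun hu => ?_
  · refine eq_top_iff.mpr fun x _ => ?_
    obtain ⟨y, rfl⟩ := ((Module.End.isUnit_iff _).mp hu).surjective x
    exact he y
  · refine eq_top_iff.mpr fun x _ => ?_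
    obtain ⟨y, rfl⟩ := ((Module.End.isUnit_iff _).mp hu).surjective x
    exact hsub y

theorem supIrred_top_quotient (hM : SupIrred (⊤ : Submodule A M)) {T : Submodule A M}
    (hT : T ≠ ⊤) : SupIrred (⊤ : Submodule A (M ⧸ T)) := by
  have := Submodule.Quotient.nontrivial_iff.mpr hT
  refine ⟨not_isMin_top, fun B C hBC => ?_⟩
  have hle : T ≤ B.comap T.mkQ ⊔ C.comap T.mkQ := le_sup_of_le_left (T.le_comap_mkQ B)
  have hcomap : B.comap T.mkQ ⊔ C.comap T.mkQ = ⊤ := by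
    rw [← sup_eq_right.mpr hle, ← Submodule.map_mkQ_eq_top, Submodule.map_sup,
      Submodule.map_comap_eq_of_surjective T.mkQ_surjective,
      Submodule.map_comap_eq_of_surjective T.mkQ_surjective, hBC]
  have hinj := Submodule.comap_injective_of_surjective T.mkQ_surjective
  exact (hM.2 hcomap).imp (fun h => hinj h) (fun h => hinj h)

theorem isEmpty_quotient_equiv_of_lt [IsNoetherian A M] {B C : Submodule A M} (hBC : B < C) :
    IsEmpty ((M ⧸ B) ≃ₗ[A] (M ⧸ C)) := by
  refine ⟨fun e => hBC.ne ?_⟩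
  have hinj : Injective (e.symm.toLinearMap ∘ₗ Submodule.factor hBC.le) :=
    IsNoetherian.injective_of_surjective_endomorphism _
      (e.symm.surjective.comp (Submodule.factor_surjective hBC.le))
  have hfactor : LinearMap.ker (Submodule.factor hBC.le) = ⊥ :=
    LinearMap.ker_eq_bot.mpr (Injective.of_comp (f := e.symm) hinj)
  calc B = LinearMap.ker (Submodule.factor hBC.le ∘ₗ B.mkQ) := by
        rw [LinearMap.ker_comp_of_ker_eq_bot _ hfactor, B.ker_mkQ]
    _ = C := by rw [Submodule.factor_comp_mk, C.ker_mkQ]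

end IndecomposableModules

section Multiplicity

theorem isDedekindFiniteMonoid_of_isLocalRing (S : Type*) [Ring S] [IsLocalRing S] :
    IsDedekindFiniteMonoid S where
  mul_eq_one_symm {a b} hab := by
    have hidem : IsIdempotentElem (b * a) := by
      rw [IsIdempotentElem, mul_assoc, ← mul_assoc a, hab, one_mul]
    rcases IsLocalRing.isUnit_or_isUnit_of_add_one (add_sub_cancel (b * a) 1) with hba | hba
    · exact (IsIdempotentElem.iff_eq_one_of_isUnit hba).mp hidem
    · have hzero : b * a = 0 := by
        simpa only [sub_eq_self] using
          (IsIdempotentElem.iff_eq_one_of_isUnit hba).mp hidem.one_sub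
      have hone : (1 : S) = 0 := by
        calc (1 : S) = a * (b * a) * b := by rw [mul_assoc, mul_assoc, hab, mul_one, hab]
          _ = 0 := by rw [hzero, mul_zero, zero_mul]
      exact absurd hone one_ne_zero

variable {A : Type*} [Ring A] {M N X : Type*} [AddCommGroup M] [Module A M]
  [AddCommGroup N] [Module A N] [AddCommGroup X] [Module A X] [IsLocalRing (Module.End A X)]

/-- The homomorphisms `M → X` that are not split epimorphisms, as a submodule over `End X`. For
`X` with local endomorphism ring this is the radical `rad(M, X)` of the module category. -/
def nonSplitHom (A M X : Type*) [Ring A] [AddCommGroup M] [Module A M] [AddCommGroup X]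
    [Module A X] [IsLocalRing (Module.End A X)] : Submodule (Module.End A X) (M →ₗ[A] X) where
  carrier := {f | ∀ g : X →ₗ[A] M, f ∘ₗ g ≠ .id}
  zero_mem' g h := one_ne_zero (α := Module.End A X) (h.symm.trans (LinearMap.zero_comp g))
  add_mem' {f f'} hf hf' g h := by
    have hsum : (f ∘ₗ g + f' ∘ₗ g : Module.End A X) = 1 := (LinearMap.add_comp ..).symm.trans h
    rcases IsLocalRing.isUnit_or_isUnit_of_add_one hsum with hu | hu
    · obtain ⟨v, hv⟩ := hu.exists_right_inv
      exact hf (g ∘ₗ v) hv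
    · obtain ⟨v, hv⟩ := hu.exists_right_inv
      exact hf' (g ∘ₗ v) hv
  smul_mem' c f hf g h := by
    have := isDedekindFiniteMonoid_of_isLocalRing (Module.End A X)
    have hcomm : (f ∘ₗ g : Module.End A X) * c = 1 := mul_eq_one_symm (a := c) h
    exact hf (g ∘ₗ c) hcomm

theorem comp_mem_nonSplitHom {f : M →ₗ[A] X} (hf : f ∈ nonSplitHom A M X) (h : N →ₗ[A] M) :
    f ∘ₗ h ∈ nonSplitHom A N X :=
  fun g => hf (h ∘ₗ g)

theorem mem_nonSplitHom_prod_iff {f : M × N →ₗ[A] X} :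
    f ∈ nonSplitHom A (M × N) X ↔
      f ∘ₗ .inl A M N ∈ nonSplitHom A M X ∧ f ∘ₗ .inr A M N ∈ nonSplitHom A N X := by
  refine ⟨fun hf => ⟨comp_mem_nonSplitHom hf _, comp_mem_nonSplitHom hf _⟩, fun hf => ?_⟩
  have hsum : f = (f ∘ₗ .inl A M N) ∘ₗ .fst A M N + (f ∘ₗ .inr A M N) ∘ₗ .snd A M N :=
    (LinearMap.coprod_comp_inl_inr f).symm
  rw [hsum]
  exact add_mem (comp_mem_nonSplitHom hf.1 _) (comp_mem_nonSplitHom hf.2 _)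

/-- The multiplicity of `X` as a direct summand of `M`, for `X` with local endomorphism ring: the
length over `End X` of `Hom(M, X) / rad(M, X)`. Expressing it as a length makes it visibly
additive and isomorphism invariant, with no choice of a decomposition of `M`. -/
noncomputable def summandMultiplicity (A M X : Type*) [Ring A] [AddCommGroup M] [Module A M]
    [AddCommGroup X] [Module A X] [IsLocalRing (Module.End A X)] : ℕ∞ :=
  Module.length (Module.End A X) ((M →ₗ[A] X) ⧸ nonSplitHom A M X)

theorem summandMultiplicity_prod :
    summandMultiplicity A (M × N) X = summandMultiplicity A M X + summandMultiplicity A N X := by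
  let restrict : (M × N →ₗ[A] X) →ₗ[Module.End A X]
      ((M →ₗ[A] X) ⧸ nonSplitHom A M X) × ((N →ₗ[A] X) ⧸ nonSplitHom A N X) :=
    ((nonSplitHom A M X).mkQ ∘ₗ (LinearMap.inl A M N).lcomp (Module.End A X) X).prod
      ((nonSplitHom A N X).mkQ ∘ₗ (LinearMap.inr A M N).lcomp (Module.End A X) X)
  have hsurj : Surjective restrict := by
    rintro ⟨⟨f⟩, ⟨g⟩⟩
    exact ⟨f.coprod g, Prod.ext (congrArg (nonSplitHom A M X).mkQ (LinearMap.coprod_inl f g))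
      (congrArg (nonSplitHom A N X).mkQ (LinearMap.coprod_inr f g))⟩
  have hker : LinearMap.ker restrict = nonSplitHom A (M × N) X := by
    ext f
    rw [mem_nonSplitHom_prod_iff, LinearMap.ker_prod, Submodule.mem_inf, LinearMap.ker_comp,
      LinearMap.ker_comp, Submodule.ker_mkQ, Submodule.ker_mkQ]
    rfl
  rw [summandMultiplicity, ← hker,
    (LinearMap.quotKerEquivOfSurjective restrict hsurj).length_eq, Module.length_prod]
  rfl

theorem summandMultiplicity_congr (e : M ≃ₗ[A] N) :
    summandMultiplicity A M X = summandMultiplicity A N X := by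
  refine (Submodule.Quotient.equiv _ _ (e.congrLeft X (Module.End A X)) ?_).length_eq
  rw [Submodule.map_equiv_eq_comap_symm]
  ext f
  refine ⟨fun hf => ?_, fun hf => comp_mem_nonSplitHom hf e.toLinearMap⟩
  simpa [LinearMap.comp_assoc] using comp_mem_nonSplitHom hf e.symm.toLinearMap

theorem summandMultiplicity_eq_zero
    (h : ∀ (f : M →ₗ[A] X) (g : X →ₗ[A] M), f ∘ₗ g ≠ .id) : summandMultiplicity A M X = 0 := by
  have htop : nonSplitHom A M X = ⊤ := eq_top_iff.mpr fun f _ => h f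
  rwa [summandMultiplicity, Module.length_eq_zero_iff, Submodule.Quotient.subsingleton_iff]

theorem summandMultiplicity_self : summandMultiplicity A X X = 1 := by
  rw [summandMultiplicity, Module.length_eq_one_iff, isSimpleModule_iff_isCoatom]
  have hone : (.id : X →ₗ[A] X) ∉ nonSplitHom A X X := fun h => h .id (LinearMap.id_comp _)
  refine ⟨fun h => hone (h ▸ Submodule.mem_top), fun B hB => ?_⟩
  obtain ⟨f, hfB, hf⟩ := SetLike.exists_of_lt hB
  obtain ⟨g, hg⟩ : ∃ g : X →ₗ[A] X, f ∘ₗ g = .id := by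
    by_contra! h
    exact hf h
  have := isDedekindFiniteMonoid_of_isLocalRing (Module.End A X)
  have hgf : (g : Module.End A X) * f = 1 := mul_eq_one_symm (a := f) hg
  refine eq_top_iff.mpr fun k _ => ?_
  have hk : k = (k * g : Module.End A X) • f := by
    change k = (k * g : Module.End A X) * f
    rw [mul_assoc, hgf, mul_one]
  rw [hk]
  exact B.smul_mem _ hfB

theorem summandMultiplicity_le_of_length_le {n : ℕ} (h : Module.length A M ≤ n) :
    summandMultiplicity A M X ≤ n := by
  have := nontrivial_of_nontrivial_end A X
  induction n generalizing M with
  | zero =>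
    have : Subsingleton M := Module.length_eq_zero_iff.mp (le_zero_iff.mp h)
    refine (summandMultiplicity_eq_zero fun f g hfg => ?_).le
    exact not_subsingleton X (LinearMap.injective_of_comp_eq_id g f hfg).subsingleton
  | succ n ih =>
    by_cases hsplit : ∃ (f : M →ₗ[A] X) (g : X →ₗ[A] M), f ∘ₗ g = .id
    · obtain ⟨f, g, hfg⟩ := hsplit
      have hexact := LinearMap.exact_subtype_ker_map f
      let e : M ≃ₗ[A] LinearMap.ker f × X :=
        (hexact.splitSurjectiveEquiv Subtype.val_injective ⟨g, hfg⟩).1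
      have hker : Module.length A (LinearMap.ker f) ≤ n := by
        rw [e.length_eq, Module.length_prod, Nat.cast_add, Nat.cast_one] at h
        have hX : 1 ≤ Module.length A X := Order.one_le_iff_pos.mpr Module.length_pos
        exact (ENat.add_le_add_iff_right ENat.one_ne_top).mp ((add_le_add_right hX _).trans h)
      rw [summandMultiplicity_congr e, summandMultiplicity_prod, summandMultiplicity_self,
        Nat.cast_add, Nat.cast_one]
      exact add_le_add_left (ih hker) 1
    · push Not at hsplit
      exact (summandMultiplicity_eq_zero hsplit).trans_le zero_le

theorem summandMultiplicity_ne_top [IsArtinian A M] [IsNoetherian A M] :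
    summandMultiplicity A M X ≠ ⊤ := by
  obtain ⟨n, hn⟩ := ENat.ne_top_iff_exists.mp (Module.length_ne_top (R := A) (M := M))
  exact ((summandMultiplicity_le_of_length_le hn.ge).trans_lt (ENat.natCast_lt_top n)).ne

end Multiplicity

section IgusaTodorovGroup

variable {R : Type u} [Ring R]

theorem ITcls_eq_add {M B C : FGMod R} (e : M ≃ₗ[Rᵐᵒᵖ] (B × C : Type u)) :
    ITcls R M = ITcls R B + ITcls R C := by
  have hrel : ITcls R M - ITcls R B - ITcls R C = 0 :=
    (QuotientAddGroup.eq_zero_iff _).mpr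
      (AddSubgroup.subset_closure (.inl ⟨M, B, C, ⟨e⟩, rfl⟩))
  rwa [sub_sub, sub_eq_zero] at hrel

theorem ITcls_eq_zero {P : FGMod R} (hP : P.Proj) : ITcls R P = 0 :=
  (QuotientAddGroup.eq_zero_iff _).mpr (AddSubgroup.subset_closure (.inr ⟨P, hP, rfl⟩))

theorem ITcls_congr {M N : FGMod R} (e : M ≃ₗ[Rᵐᵒᵖ] N) : ITcls R M = ITcls R N := by
  have hzero : ITcls R ⟨PUnit.{u + 1}⟩ = 0 :=
    ITcls_eq_zero (inferInstanceAs (Module.Projective Rᵐᵒᵖ PUnit.{u + 1}))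
  rw [ITcls_eq_add (C := ⟨PUnit⟩) (e.trans LinearEquiv.prodUnique.symm), hzero, add_zero]

theorem FGMod.Indec.isLocalRing_end [IsArtinianRing Rᵐᵒᵖ] {M : FGMod R} (hM : M.Indec) :
    IsLocalRing (Module.End Rᵐᵒᵖ M) :=
  hM.isIndecomposable.isLocalRing_end

/-- The coordinate of the Igusa–Todorov group at a non-projective `X` with local endomorphism
ring: the homomorphism sending `[M]` to the multiplicity of `X` in `M`. -/
noncomputable def multiplicityHom [IsArtinianRing Rᵐᵒᵖ] (X : FGMod R)
    [IsLocalRing (Module.End Rᵐᵒᵖ X)] (hX : ¬ X.Proj) : ITK R →+ ℤ :=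
  QuotientAddGroup.lift _
    (FreeAbelianGroup.lift fun M : FGMod R => ((summandMultiplicity Rᵐᵒᵖ M X).toNat : ℤ)) <| by
    rw [AddSubgroup.closure_le]
    rintro _ (⟨M, B, C, ⟨e⟩, rfl⟩ | ⟨P, hP, rfl⟩)
    · simp only [SetLike.mem_coe, AddMonoidHom.mem_ker, map_sub, FreeAbelianGroup.lift_apply_of]
      rw [summandMultiplicity_congr e, summandMultiplicity_prod,
        ENat.toNat_add summandMultiplicity_ne_top summandMultiplicity_ne_top, Nat.cast_add]
      ring
    · have : Module.Projective Rᵐᵒᵖ P := hP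
      have hzero : summandMultiplicity Rᵐᵒᵖ P X = 0 := summandMultiplicity_eq_zero
        fun f g hfg => hX (Module.Projective.of_split g f hfg)
      simp only [SetLike.mem_coe, AddMonoidHom.mem_ker, FreeAbelianGroup.lift_apply_of, hzero,
        ENat.toNat_zero, Nat.cast_zero]

theorem multiplicityHom_ITcls [IsArtinianRing Rᵐᵒᵖ] (X : FGMod R)
    [IsLocalRing (Module.End Rᵐᵒᵖ X)] (hX : ¬ X.Proj) (M : FGMod R) :
    multiplicityHom X hX (ITcls R M) = (summandMultiplicity Rᵐᵒᵖ M X).toNat :=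
  FreeAbelianGroup.lift_apply_of _ _

theorem linearIndependent_ITcls [IsArtinianRing Rᵐᵒᵖ] {ι : Type*} (M : ι → FGMod R)
    (hind : ∀ i, (M i).Indec) (hproj : ∀ i, ¬ (M i).Proj)
    (hiso : Pairwise fun i j => ¬ (M i).Iso (M j)) :
    LinearIndependent ℤ fun i => ITcls R (M i) := by
  have hloc (i : ι) := (hind i).isLocalRing_end
  refine .of_pairwise_dual_eq_zero_one _
    (fun i => (multiplicityHom (M i) (hproj i)).toIntLinearMap) (fun i j hij => ?_) fun i => ?_
  · have hzero : summandMultiplicity Rᵐᵒᵖ (M j) (M i) = 0 := by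
      refine summandMultiplicity_eq_zero fun f g hfg => hiso hij.symm ?_
      have := (hind i).1
      exact ⟨.ofBijective f ((hind j).isIndecomposable.bijective_of_comp_eq_id hfg)⟩
    simp [multiplicityHom_ITcls, hzero]
  · simp [multiplicityHom_ITcls, summandMultiplicity_self]

theorem FGMod.isSummand_prod_left (M N : FGMod R) : M.IsSummand (M.prod N) :=
  ⟨LinearMap.range (.inl Rᵐᵒᵖ M N), LinearMap.range (.inr Rᵐᵒᵖ M N),
    LinearMap.isCompl_range_inl_inr, ⟨.ofInjective _ LinearMap.inl_injective⟩⟩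

theorem FGMod.isSummand_prod_right (M N : FGMod R) : N.IsSummand (M.prod N) :=
  ⟨LinearMap.range (.inr Rᵐᵒᵖ M N), LinearMap.range (.inl Rᵐᵒᵖ M N),
    LinearMap.isCompl_range_inl_inr.symm, ⟨.ofInjective _ LinearMap.inr_injective⟩⟩

theorem FGMod.IsSummand.exists_comp_eq_id {N M : FGMod R} (h : N.IsSummand M) :
    ∃ (f : M →ₗ[Rᵐᵒᵖ] N) (g : N →ₗ[Rᵐᵒᵖ] M), f ∘ₗ g = .id := by
  obtain ⟨B, C, hBC, ⟨e⟩⟩ := h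
  refine ⟨e.symm.toLinearMap ∘ₗ B.projectionOnto C hBC, B.subtype ∘ₗ e.toLinearMap, ?_⟩
  rw [LinearMap.comp_assoc, ← LinearMap.comp_assoc e.toLinearMap,
    Submodule.projectionOnto_comp_subtype, LinearMap.id_comp, LinearEquiv.symm_comp]

theorem FGMod.IsSummand.iso_or_iso_of_prod {M₁ M₂ N : FGMod R}
    [IsLocalRing (Module.End Rᵐᵒᵖ N)] (h₁ : M₁.Indec) (h₂ : M₂.Indec)
    (h : N.IsSummand (M₁.prod M₂)) : M₁.Iso N ∨ M₂.Iso N := by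
  have := nontrivial_of_nontrivial_end Rᵐᵒᵖ N
  obtain ⟨f, g, hfg⟩ := h.exists_comp_eq_id
  by_contra! hiso
  have hmem : f ∈ nonSplitHom Rᵐᵒᵖ (M₁ × M₂) N := mem_nonSplitHom_prod_iff.mpr
    ⟨fun _ hs => hiso.1 ⟨.ofBijective _ (h₁.isIndecomposable.bijective_of_comp_eq_id hs)⟩,
      fun _ hs => hiso.2 ⟨.ofBijective _ (h₂.isIndecomposable.bijective_of_comp_eq_id hs)⟩⟩
  exact hmem g hfg

theorem ITgen_prod [IsArtinianRing Rᵐᵒᵖ] {M₁ M₂ : FGMod R} (h₁ : M₁.Indec) (h₂ : M₂.Indec)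
    (hp₁ : ¬ M₁.Proj) (hp₂ : ¬ M₂.Proj) :
    ITgen R (M₁.prod M₂) = AddSubgroup.closure {ITcls R M₁, ITcls R M₂} := by
  refine congrArg AddSubgroup.closure (Set.Subset.antisymm ?_ ?_)
  · rintro _ ⟨N, hN, hind, -, rfl⟩
    have := hind.isLocalRing_end
    rcases hN.iso_or_iso_of_prod h₁ h₂ with ⟨⟨e⟩⟩ | ⟨⟨e⟩⟩
    · exact .inl (ITcls_congr e.symm)
    · exact .inr (ITcls_congr e.symm)
  · rintro _ (rfl | rfl)
    · exact ⟨M₁, M₁.isSummand_prod_left M₂, h₁, hp₁, rfl⟩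
    · exact ⟨M₂, M₁.isSummand_prod_right M₂, h₂, hp₂, rfl⟩

end IgusaTodorovGroup

section Ranks

variable {R : Type u} [Ring R]

theorem fg_toIntSubmodule_iff {G : Type*} [AddCommGroup G] {H : AddSubgroup G} :
    (AddSubgroup.toIntSubmodule H).FG ↔ H.FG :=
  Submodule.fg_iff_addSubgroup_fg _

theorem rkIT_map_le (f : ITK R →+ ITK R) {H : AddSubgroup (ITK R)} (hH : H.FG) :
    rkIT R (H.map f) ≤ rkIT R H :=
  have : Module.Finite ℤ (AddSubgroup.toIntSubmodule H) := .of_fg (fg_toIntSubmodule_iff.mpr hH)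
  Submodule.finrank_map_le f.toIntLinearMap (AddSubgroup.toIntSubmodule H)

theorem antitone_rkIT_map_pow (f : AddMonoid.End (ITK R)) {H : AddSubgroup (ITK R)} (hH : H.FG) :
    Antitone fun i : ℕ => rkIT R (H.map ((f ^ i : AddMonoid.End (ITK R)) : ITK R →+ ITK R)) := by
  refine antitone_nat_of_succ_le fun i => ?_
  have hfg : (H.map ((f ^ i : AddMonoid.End (ITK R)) : ITK R →+ ITK R)).FG :=
    fg_toIntSubmodule_iff.mp
      ((fg_toIntSubmodule_iff.mpr hH).map (AddMonoidHom.toIntLinearMap (f ^ i)))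
  have hmap : H.map ((f ^ (i + 1) : AddMonoid.End (ITK R)) : ITK R →+ ITK R) =
      (H.map (f ^ i : AddMonoid.End (ITK R))).map f :=
    (congrArg H.map (pow_succ' f i)).trans (AddSubgroup.map_map _ _ _).symm
  exact (congrArg (rkIT R) hmap).trans_le (rkIT_map_le f hfg)

theorem rkIT_map_pow_phiIT (f : AddMonoid.End (ITK R)) {M : FGMod R} (hM : (ITgen R M).FG)
    {i : ℕ} (hi : phiIT R f M ≤ i) :
    rkIT R ((ITgen R M).map ((f ^ i : AddMonoid.End (ITK R)) : ITK R →+ ITK R)) =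
      rkIT R ((ITgen R M).map ((f ^ phiIT R f M : AddMonoid.End (ITK R)) : ITK R →+ ITK R)) := by
  let r (i : ℕ) : ℕ :=
    rkIT R ((ITgen R M).map ((f ^ i : AddMonoid.End (ITK R)) : ITK R →+ ITK R))
  have hne : {n | ∀ i, n ≤ i → r i = r n}.Nonempty :=
    ⟨argmin r, fun i hi => (antitone_rkIT_map_pow f hM hi).antisymm (argmin_le r i)⟩
  exact Nat.sInf_mem hne i hi

theorem one_le_phiIT_of_rkIT_map_lt {f : AddMonoid.End (ITK R)} {M : FGMod R}
    (hM : (ITgen R M).FG) (h : rkIT R ((ITgen R M).map f) < rkIT R (ITgen R M)) :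
    1 ≤ phiIT R f M := by
  by_contra! hlt
  have hphi : phiIT R f M = 0 := Nat.lt_one_iff.mp hlt
  have hrk := rkIT_map_pow_phiIT f hM (i := 1) hlt.le
  rw [hphi, pow_one, pow_zero] at hrk
  exact h.ne (hrk.trans (congrArg (rkIT R) (AddSubgroup.map_id _)))

theorem rkIT_closure_range {ι : Type*} [Fintype ι] {x : ι → ITK R} (hx : LinearIndependent ℤ x) :
    rkIT R (AddSubgroup.closure (Set.range x)) = Fintype.card ι := by
  rw [rkIT, AddSubgroup.toIntSubmodule_closure, finrank_span_eq_card hx]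

theorem rkIT_le_one_of_le_zmultiples {H : AddSubgroup (ITK R)} {s : ITK R}
    (h : H ≤ AddSubgroup.zmultiples s) : rkIT R H ≤ 1 := by
  rw [AddSubgroup.zmultiples_eq_closure, ← AddSubgroup.toIntSubmodule.le_iff_le,
    AddSubgroup.toIntSubmodule_closure] at h
  calc rkIT R H ≤ Module.finrank ℤ (Submodule.span ℤ {s}) := Submodule.finrank_mono h
    _ ≤ 1 := (finrank_span_le_card {s}).trans (by simp)

theorem one_le_phiIT_prod_of_mem_zmultiples [IsArtinianRing Rᵐᵒᵖ] {f : AddMonoid.End (ITK R)}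
    {M₁ M₂ : FGMod R} (h₁ : M₁.Indec) (h₂ : M₂.Indec) (hp₁ : ¬ M₁.Proj) (hp₂ : ¬ M₂.Proj)
    (hiso : ¬ M₁.Iso M₂) {s : ITK R} (hs₁ : f (ITcls R M₁) ∈ AddSubgroup.zmultiples s)
    (hs₂ : f (ITcls R M₂) ∈ AddSubgroup.zmultiples s) : 1 ≤ phiIT R f (M₁.prod M₂) := by
  have hgen := ITgen_prod h₁ h₂ hp₁ hp₂
  have hrank : rkIT R (ITgen R (M₁.prod M₂)) = 2 := by
    have hli : LinearIndependent ℤ fun i : Fin 2 => ITcls R (![M₁, M₂] i) := by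
      refine linearIndependent_ITcls _ (Fin.forall_fin_two.mpr ⟨h₁, h₂⟩)
        (Fin.forall_fin_two.mpr ⟨hp₁, hp₂⟩) fun i j hij => ?_
      fin_cases i <;> fin_cases j
      · exact absurd rfl hij
      · exact hiso
      · exact fun ⟨e⟩ => hiso ⟨e.symm⟩
      · exact absurd rfl hij
    have hrange : Set.range (fun i : Fin 2 => ITcls R (![M₁, M₂] i)) =
        {ITcls R M₁, ITcls R M₂} := by
      rw [Set.range_comp', Matrix.range_cons_cons_empty, Set.image_pair]
    rw [hgen, ← hrange, rkIT_closure_range hli, Fintype.card_fin]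
  have hrank_map : rkIT R ((ITgen R (M₁.prod M₂)).map f) ≤ 1 := by
    refine rkIT_le_one_of_le_zmultiples (s := s) (AddSubgroup.map_le_iff_le_comap.mpr ?_)
    rw [hgen, AddSubgroup.closure_le]
    exact Set.pair_subset hs₁ hs₂
  refine one_le_phiIT_of_rkIT_map_lt ?_ (by omega)
  rw [hgen, AddSubgroup.fg_iff]
  exact ⟨_, rfl, Set.toFinite _⟩

end Ranks

section QuotientsOfProjectives

theorem nonempty_sup_equiv_prod_of_disjoint {A M : Type*} [Ring A] [AddCommGroup M] [Module A M]
    {B C : Submodule A M} (h : Disjoint B C) : Nonempty (↥(B ⊔ C) ≃ₗ[A] B × C) := by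
  have hinj : Injective (B.subtype.coprod C.subtype) := by
    rw [← LinearMap.ker_eq_bot, LinearMap.ker_coprod_of_disjoint_range, Submodule.ker_subtype,
      Submodule.ker_subtype, Submodule.prod_bot]
    rwa [Submodule.range_subtype, Submodule.range_subtype]
  exact ⟨(LinearEquiv.ofEq _ _ (Submodule.sup_eq_range B C)).trans (.symm (.ofInjective _ hinj))⟩

variable {R : Type u} [Ring R]

theorem FGMod.Indec.supIrred_top [IsArtinianRing Rᵐᵒᵖ] {P : FGMod R} (hind : P.Indec)
    (hproj : P.Proj) : SupIrred (⊤ : Submodule Rᵐᵒᵖ P) :=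
  have := hind.isLocalRing_end
  have : Module.Projective Rᵐᵒᵖ P := hproj
  supIrred_top_of_isLocalRing_end

theorem FGMod.indec_of_equiv_quotient {P M : FGMod R} (hP : SupIrred (⊤ : Submodule Rᵐᵒᵖ P))
    {T : Submodule Rᵐᵒᵖ P} (hT : T ≠ ⊤) (e : M ≃ₗ[Rᵐᵒᵖ] (P.carrier ⧸ T)) : M.Indec :=
  (IsIndecomposable.of_supIrred_top (supIrred_top_quotient hP hT)).of_linearEquiv e

theorem FGMod.Indec.not_proj_of_equiv_quotient {P M : FGMod R} (hind : P.Indec)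
    {T : Submodule Rᵐᵒᵖ P} (hbot : T ≠ ⊥) (htop : T ≠ ⊤) (e : M ≃ₗ[Rᵐᵒᵖ] (P.carrier ⧸ T)) :
    ¬ M.Proj := fun hM =>
  have : Module.Projective Rᵐᵒᵖ M := hM
  hind.isIndecomposable.not_projective_quotient hbot htop (.of_equiv e)

theorem isSyzygy_of_equiv_quotient [IsArtinianRing Rᵐᵒᵖ] {P M : FGMod R} (hproj : P.Proj)
    (hP : SupIrred (⊤ : Submodule Rᵐᵒᵖ P)) {T : Submodule Rᵐᵒᵖ P} (hT : T ≠ ⊤)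
    (e : M ≃ₗ[Rᵐᵒᵖ] (P.carrier ⧸ T)) : IsSyzygy M ⟨T⟩ := by
  let cover : P →ₗ[Rᵐᵒᵖ] M := e.symm.toLinearMap ∘ₗ T.mkQ
  have hker : LinearMap.ker cover = T := by rw [LinearEquiv.ker_comp, Submodule.ker_mkQ]
  refine ⟨P, cover, ⟨hproj, e.symm.surjective.comp T.mkQ_surjective, fun N hN => ?_⟩, ?_⟩
  · rw [hker] at hN
    exact (hP.2 hN).resolve_right hT
  · rw [hker]
    exact ⟨.refl _ _⟩

theorem isAtom_of_equiv_isSimpleModule {A M S : Type*} [Ring A] [AddCommGroup M] [Module A M]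
    [AddCommGroup S] [Module A S] [IsSimpleModule A S] {T : Submodule A M} (e : T ≃ₗ[A] S) :
    IsAtom T :=
  isSimpleModule_iff_isAtom.mp (.congr e)

theorem phi_ge_one_of_two_iso_simples_in_socle_general (R : Type u) [Ring R]
    [IsArtinianRing Rᵐᵒᵖ]
    (OmK : AddMonoid.End (ITK R)) (hOm : IsSyzygyEnd R OmK)
    (P : FGMod R) (hind : P.Indec) (hproj : P.Proj)
    (T₁ T₂ : Submodule Rᵐᵒᵖ P) (hT : Nonempty (T₁ ≃ₗ[Rᵐᵒᵖ] T₂)) (hbot : T₁ ≠ ⊥)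
    (hdisj : Disjoint T₁ T₂)
    (M₁ M₂ : FGMod R)
    (hM₁ : Nonempty (M₁ ≃ₗ[Rᵐᵒᵖ] (P.carrier ⧸ T₁)))
    (hM₂ : Nonempty (M₂ ≃ₗ[Rᵐᵒᵖ] (P.carrier ⧸ (T₁ ⊔ T₂)))) :
    M₁.Indec ∧ M₂.Indec ∧ ¬ M₁.Iso M₂ ∧ 1 ≤ phiIT R OmK (M₁.prod M₂) := by
  obtain ⟨e⟩ := hT
  obtain ⟨e₁⟩ := hM₁
  obtain ⟨e₂⟩ := hM₂
  have hbot₂ : T₂ ≠ ⊥ := by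
    rintro rfl
    exact hbot (Submodule.subsingleton_iff_eq_bot.mp e.toEquiv.subsingleton)
  have hlt : T₁ < T₁ ⊔ T₂ := left_lt_sup.mpr fun hle => hbot₂ (hdisj.symm.eq_bot_of_le hle)
  have hP := hind.supIrred_top hproj
  have htop : T₁ ⊔ T₂ ≠ ⊤ := fun h =>
    (hind.2 T₁ T₂ ⟨hdisj, codisjoint_iff.mpr h⟩).elim hbot hbot₂
  have htop₁ : T₁ ≠ ⊤ := hlt.ne_top
  have hM₁ind := FGMod.indec_of_equiv_quotient hP htop₁ e₁
  have hM₂ind := FGMod.indec_of_equiv_quotient hP htop e₂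
  have hiso : ¬ M₁.Iso M₂ := fun ⟨e₁₂⟩ =>
    (isEmpty_quotient_equiv_of_lt hlt).false ((e₁.symm.trans e₁₂).trans e₂)
  have hΩ₁ : OmK (ITcls R M₁) = ITcls R ⟨T₁⟩ :=
    hOm _ _ (isSyzygy_of_equiv_quotient hproj hP htop₁ e₁)
  have hΩ₂ : OmK (ITcls R M₂) = 2 • ITcls R ⟨T₁⟩ := by
    obtain ⟨e₁₂⟩ := nonempty_sup_equiv_prod_of_disjoint hdisj
    rw [hOm _ _ (isSyzygy_of_equiv_quotient hproj hP htop e₂),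
      ITcls_eq_add (B := ⟨T₁⟩) (C := ⟨T₂⟩) e₁₂, ITcls_congr (M := ⟨T₂⟩) (N := ⟨T₁⟩) e.symm,
      two_nsmul]
  refine ⟨hM₁ind, hM₂ind, hiso, one_le_phiIT_prod_of_mem_zmultiples hM₁ind hM₂ind
    (hind.not_proj_of_equiv_quotient hbot htop₁ e₁)
    (hind.not_proj_of_equiv_quotient hlt.ne_bot htop e₂) hiso (s := ITcls R ⟨T₁⟩) ?_ ?_⟩
  · exact hΩ₁ ▸ AddSubgroup.mem_zmultiples _
  · exact hΩ₂ ▸ AddSubgroup.nsmul_mem_zmultiples _ 2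

end QuotientsOfProjectives

/-- If an indecomposable projective `P` contains a submodule
isomorphic to `S ⊕ S` for a simple `S` in its socle (two distinct simple submodules
`T₁, T₂` both isomorphic to `S`), then `P/S` and `P/(S ⊕ S)` are non-isomorphic
indecomposable modules and `φ(M₁ ⊕ M₂) ≥ 1`. -/
theorem phi_ge_one_of_two_iso_simples_in_socle (R : Type u) [Ring R]
    [IsArtinianRing Rᵐᵒᵖ]
    (OmK : AddMonoid.End (ITK R)) (hOm : IsSyzygyEnd R OmK)
    (P : FGMod R) (hind : P.Indec) (hproj : P.Proj)
    (S : Type u) [AddCommGroup S] [Module Rᵐᵒᵖ S] (hS : IsSimpleModule Rᵐᵒᵖ S)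
    (T₁ T₂ : Submodule Rᵐᵒᵖ P)
    (hT₁ : Nonempty (T₁ ≃ₗ[Rᵐᵒᵖ] S)) (hT₂ : Nonempty (T₂ ≃ₗ[Rᵐᵒᵖ] S))
    (hne : T₁ ≠ T₂)
    (M₁ M₂ : FGMod R)
    (hM₁ : Nonempty (M₁ ≃ₗ[Rᵐᵒᵖ] (P.carrier ⧸ T₁)))
    (hM₂ : Nonempty (M₂ ≃ₗ[Rᵐᵒᵖ] (P.carrier ⧸ (T₁ ⊔ T₂)))) :
    M₁.Indec ∧ M₂.Indec ∧ ¬ M₁.Iso M₂ ∧ 1 ≤ phiIT R OmK (M₁.prod M₂) := by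
  obtain ⟨e₁⟩ := hT₁
  obtain ⟨e₂⟩ := hT₂
  have hdisj := (isAtom_of_equiv_isSimpleModule e₁).disjoint_of_ne
    (isAtom_of_equiv_isSimpleModule e₂) hne
  exact phi_ge_one_of_two_iso_simples_in_socle_general R OmK hOm P hind hproj T₁ T₂
    ⟨e₁.trans e₂.symm⟩ (isAtom_of_equiv_isSimpleModule e₁).1 hdisj M₁ M₂ hM₁ hM₂
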